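/- Let T be a weakly almost periodic operator on a complex Banach space X. If σ(T) ∩ 𝕋 is countable, where 𝕋 = {λ ∈ ℂ : |λ| = 1}, then T is almost periodic: for every x ∈ X the orbit {Tⁿ x : n ≥ 0} is relatively compact in the norm topology. -/

import Mathlib

open Filter
open Topology Metric


/-- local bound -/
theorem aux_local_bound {E : Type*} [NormedAddCommGroup E] [NormedSpace ℂ E]
    (G : ℂ → E) (hb : ∀ z : ℂ, ‖z‖ ≠ 1 → ‖G z‖ ≤ 1 / |‖z‖ - 1|)
    (c z : ℂ) (ρ v : ℝ) (hc : ‖c‖ = 1) (hρ : 0 < ρ) (hρ1 : ρ ≤ 1/2) (hz : z = c * (1 + v)) (hv : |v| ≤ ρ)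
    (hd : DifferentiableOn ℂ G (closedBall c ρ)) : ‖G z‖ * ρ ≤ 6 := by
  have hc0 : c ≠ 0 := by rintro rfl; simp at hc
  set q : ℂ → ℂ := fun w => (w / c - 1)^2 + ρ^2 * (w / c - 1) + ρ^2 with hq
  have hqd : Differentiable ℂ q := by fun_prop
  have hdq : DifferentiableOn ℂ (fun w => q w • G w) (closedBall c ρ) :=
    hqd.differentiableOn.smul hd
  have hdc : DiffContOnCl ℂ (fun w => q w • G w) (ball c ρ) := hdq.diffContOnCl_ball subset_rfl
  have hfr : ∀ w ∈ frontier (ball c ρ), ‖q w • G w‖ ≤ 3 * ρ := by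
    intro w hw
    rw [frontier_ball _ hρ.ne', mem_sphere, dist_eq_norm] at hw
    set u := w / c - 1 with hu
    have hun : ‖u‖ = ρ := by
      have : u = (w - c) / c := by rw [hu]; field_simp
      rw [this, norm_div, hw, hc, div_one]
    have hwu : ‖w‖ = ‖1 + u‖ := by
      have : w = c * (1 + u) := by rw [hu]; field_simp; ring
      rw [this, norm_mul, hc, one_mul]
    have hqq : ‖q w‖ = ρ * |‖w‖^2 - 1| := by
      have h1 : ((ρ:ℂ)^2) = u * (starRingEnd ℂ) u := by
        rw [Complex.mul_conj, Complex.normSq_eq_norm_sq, hun]; push_cast; rfl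
      have h2 : ((‖w‖^2 - 1 : ℝ) : ℂ) = u + (starRingEnd ℂ) u + u * (starRingEnd ℂ) u := by
        rw [hwu, ← Complex.normSq_eq_norm_sq]; push_cast
        rw [← Complex.mul_conj]; simp; ring
      have h3 : q w = u * ((‖w‖^2 - 1 : ℝ) : ℂ) := by
        rw [h2]; simp only [hq]; rw [← hu, h1]; ring
      rw [h3, norm_mul, hun, Complex.norm_real, Real.norm_eq_abs]
    rw [norm_smul, hqq]
    have hw3 : ‖w‖ + 1 ≤ 3 := by
      have := norm_add_le 1 u
      rw [hwu]; simp at this; linarith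
    by_cases h1 : ‖w‖ = 1
    · rw [h1]; simp; exact hρ.le
    · have := hb w h1
      have h4 : |‖w‖^2 - 1| = |‖w‖ - 1| * (‖w‖ + 1) := by
        have h6 : ‖w‖^2 - 1 = (‖w‖ - 1) * (‖w‖ + 1) := by ring
        rw [h6, abs_mul, abs_of_nonneg (a := ‖w‖ + 1) (by positivity)]
      have hpos : 0 < |‖w‖ - 1| := abs_pos.2 (sub_ne_zero.2 h1)
      rw [le_div_iff₀ hpos] at this
      rw [h4]
      calc ρ * (|‖w‖ - 1| * (‖w‖ + 1)) * ‖G w‖ = ρ * (‖w‖ + 1) * (‖G w‖ * |‖w‖ - 1|) := by ring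
        _ ≤ ρ * (‖w‖ + 1) * 1 := by gcongr
        _ ≤ 3 * ρ := by nlinarith
  have hzmem : z ∈ closure (ball c ρ) := by
    rw [closure_ball _ hρ.ne', mem_closedBall, dist_eq_norm, hz]
    have : c * (1 + v) - c = c * v := by ring
    rw [this, norm_mul, hc, one_mul, Complex.norm_real]; exact hv
  have := Complex.norm_le_of_forall_mem_frontier_norm_le isBounded_ball hdc hfr hzmem
  rw [norm_smul] at this
  have hqz : ρ^2 / 2 ≤ ‖q z‖ := by
    have : q z = ((v^2 + ρ^2 * v + ρ^2 : ℝ) : ℂ) := by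
      simp only [hq]; rw [hz]; push_cast; field_simp; ring
    rw [this, Complex.norm_real]
    refine le_trans ?_ (le_abs_self _)
    have : -(1/2) ≤ v := by linarith [neg_abs_le v]
    nlinarith [sq_nonneg v, sq_nonneg ρ]
  have h5 : ρ^2/2 * ‖G z‖ ≤ 3 * ρ := le_trans (by gcongr) this
  nlinarith [norm_nonneg (G z)]

theorem aux_bound {E : Type*} [NormedAddCommGroup E] [NormedSpace ℂ E]
    (G : ℂ → E) (hb : ∀ z : ℂ, ‖z‖ ≠ 1 → ‖G z‖ ≤ 1 / |‖z‖ - 1|)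
    (l : ℂ) (hl : ‖l‖ = 1) (r : ℝ) (hr1 : r ≤ 1)
    (hd : ∀ z, z ≠ l → dist z l < r → DifferentiableAt ℂ G z) (z : ℂ) (hzl : z ≠ l)
    (hz : dist z l < r / 4) : ‖(z - l) • G z‖ ≤ 18 := by
  rw [norm_smul]
  have hz' : ‖z - l‖ < r / 4 := by rwa [← dist_eq_norm]
  have habs : |‖z‖ - 1| ≤ ‖z - l‖ := by rw [← hl]; exact abs_norm_sub_norm_le z l
  have hzpos : 0 < ‖z‖ := by
    have := (abs_le.1 habs).1; linarith
  set c : ℂ := z / ‖z‖ with hcdef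
  set v : ℝ := ‖z‖ - 1 with hvdef
  have hzc : (‖z‖ : ℂ) ≠ 0 := by exact_mod_cast hzpos.ne'
  have hc : ‖c‖ = 1 := by rw [hcdef, norm_div, Complex.norm_real, norm_norm, div_self hzpos.ne']
  have hzeq : z = c * (1 + v) := by rw [hcdef, hvdef]; push_cast; field_simp; try ring
  have hzcn : ‖z - c‖ = |v| := by
    have : z - c = c * v := by linear_combination hzeq
    rw [this, norm_mul, hc, one_mul, Complex.norm_real, Real.norm_eq_abs]
  have hcl : ‖z - l‖ ≤ |v| + ‖c - l‖ := by rw [← hzcn]; exact norm_sub_le_norm_sub_add_norm_sub _ _ _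
  have hcl2 : ‖c - l‖ ≤ 2 * ‖z - l‖ := by
    have := norm_sub_le_norm_sub_add_norm_sub c z l
    rw [norm_sub_rev c z, hzcn] at this; linarith
  by_cases hcase : ‖c - l‖ / 2 < |v|
  · have hv0 : 0 < |v| := lt_of_le_of_lt (by positivity) hcase
    have h1 : ‖z‖ ≠ 1 := by intro h; rw [hvdef, h] at hv0; simp at hv0
    have h2 := hb z h1
    rw [le_div_iff₀ hv0] at h2
    calc ‖z - l‖ * ‖G z‖ ≤ (3 * |v|) * ‖G z‖ := by gcongr; linarith
      _ ≤ 18 := by linarith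
  · push Not at hcase
    have hρ : 0 < ‖c - l‖ / 2 := by
      rcases (norm_nonneg (c - l)).eq_or_lt with h | h
      · exfalso
        rw [← h] at hcase hcl
        have : ‖z - l‖ ≤ 0 := by linarith
        exact hzl (sub_eq_zero.1 (norm_le_zero_iff.1 this))
      · linarith
    have := aux_local_bound G hb c z (‖c - l‖ / 2) v hc hρ (by linarith) hzeq hcase (by
      intro w hw
      rw [mem_closedBall, dist_eq_norm] at hw
      refine (hd w ?_ ?_).differentiableWithinAt
      · rintro rfl; rw [norm_sub_rev] at hw; linarith
      · rw [dist_eq_norm]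
        have := norm_sub_le_norm_sub_add_norm_sub w c l
        linarith)
    calc ‖z - l‖ * ‖G z‖ ≤ (3 * (‖c - l‖ / 2)) * ‖G z‖ := by gcongr; linarith
      _ ≤ 18 := by linarith

theorem aux_isolated (S : Set ℂ) (hS : IsClosed S) (hc : S.Countable) (hne : S.Nonempty) :
    ∃ l ∈ S, ∃ r > 0, r ≤ 1 ∧ ∀ z, z ≠ l → dist z l < r → z ∉ S := by
  by_contra! H
  have hp : Perfect S := by
    refine ⟨hS, fun x hx => ?_⟩
    rw [accPt_iff_nhds]
    intro U hU
    obtain ⟨r, hr, hrU⟩ := Metric.mem_nhds_iff.1 hU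
    obtain ⟨z, h1, h2, h3⟩ := H x hx (min r 1) (by positivity) (min_le_right _ _)
    exact ⟨z, ⟨hrU (lt_of_lt_of_le h2 (min_le_left _ _)), h3⟩, h1⟩
  obtain ⟨f, hf, -, hinj⟩ := hp.exists_nat_bool_injection hne
  have h1 : (Set.range f).Countable := hc.mono hf
  have h2 : (Set.univ : Set (ℕ → Bool)).Countable := by
    have := h1.preimage_of_injOn (f := f) hinj.injOn
    simpa using this
  rw [Set.countable_univ_iff] at h2
  have := Cardinal.mk_le_aleph0 (α := ℕ → Bool)
  have h3 : Cardinal.mk (ℕ → Bool) = 2 ^ Cardinal.aleph0 := by simp only [Cardinal.mk_pi, Cardinal.mk_bool, Cardinal.prod_const, Cardinal.mk_nat, Cardinal.lift_id]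
  rw [h3] at this
  exact absurd (Cardinal.cantor Cardinal.aleph0) (not_lt.2 this)

theorem aux_nebot (z : ℂ) : (𝓝[{w : ℂ | ‖w‖ ≠ 1}] z).NeBot := by
  rw [← mem_closure_iff_nhdsWithin_neBot]
  have : {w : ℂ | ‖w‖ ≠ 1} = (sphere (0:ℂ) 1)ᶜ := by ext; simp
  rw [this]
  have h := interior_sphere (0:ℂ) (r := 1) one_ne_zero
  have : closure (sphere (0:ℂ) 1)ᶜ = Set.univ := by rw [closure_compl, h, Set.compl_empty]
  rw [this]; trivial

theorem aux_complex {E : Type*} [NormedAddCommGroup E] [NormedSpace ℂ E] [CompleteSpace E]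
    (G : ℂ → E) (hb : ∀ z : ℂ, ‖z‖ ≠ 1 → ‖G z‖ ≤ 1 / |‖z‖ - 1|) (S : Set ℂ) (hSc : IsClosed S)
    (hS1 : ∀ z ∈ S, ‖z‖ = 1)
    (hS : S.Countable)
    (hd : ∀ z, z ∉ S → DifferentiableAt ℂ G z) (hne : ∃ z, ‖z‖ ≠ 1 ∧ G z ≠ 0) :
    ∃ l, ‖l‖ = 1 ∧ ∃ L : E, L ≠ 0 ∧ 
      Tendsto (fun z => (z - l) • G z) (𝓝[{w : ℂ | ‖w‖ ≠ 1}] l) (𝓝 L) := by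
  set A : Set ℂ := {w : ℂ | ‖w‖ ≠ 1} with hA
  have hAo : IsOpen A := isOpen_ne_fun continuous_norm continuous_const
  let G' : ℂ → E := fun z => limUnder (𝓝[A] z) G
  let reg : ℂ → Prop := fun z => ∃ r > 0, ∃ F : ℂ → E, DifferentiableOn ℂ F (ball z r) ∧
    ∀ w ∈ ball z r, w ∈ A → F w = G w
  have hG'F : ∀ z r (F : ℂ → E), DifferentiableOn ℂ F (ball z r) → 
      (∀ w ∈ ball z r, w ∈ A → F w = G w) → ∀ w ∈ ball z r, G' w = F w := by
    intro z r F hF hFG w hw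
    have := aux_nebot w
    apply Tendsto.limUnder_eq
    have h1 : Tendsto F (𝓝[A] w) (𝓝 (F w)) :=
      ((hF.differentiableAt (isOpen_ball.mem_nhds hw)).continuousAt.tendsto).mono_left
        nhdsWithin_le_nhds
    refine h1.congr' ?_
    filter_upwards [self_mem_nhdsWithin, nhdsWithin_le_nhds (isOpen_ball.mem_nhds hw)] with u hu hu2
    exact hFG u hu2 hu
  have hG'd : ∀ z, reg z → DifferentiableAt ℂ G' z := by
    rintro z ⟨r, hr, F, hF, hFG⟩
    have h1 : z ∈ ball z r := mem_ball_self hr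
    refine (hF.differentiableAt (isOpen_ball.mem_nhds h1)).congr_of_eventuallyEq ?_
    filter_upwards [isOpen_ball.mem_nhds h1] with w hw using hG'F z r F hF hFG w hw
  have hregS : ∀ z, z ∉ S → reg z := by
    intro z hz
    obtain ⟨r, hr, hrU⟩ := Metric.isOpen_iff.1 hSc.isOpen_compl z hz
    exact ⟨r, hr, G, fun w hw => (hd w (hrU hw)).differentiableWithinAt, fun _ _ _ => rfl⟩
  have hAS : ∀ z ∈ A, z ∉ S := fun z hz h => hz (hS1 z h)
  have hG'A : ∀ z ∈ A, G' z = G z := by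
    intro z hz
    obtain ⟨r, hr, hrU⟩ := Metric.isOpen_iff.1 hSc.isOpen_compl z (hAS z hz)
    exact hG'F z r G (fun w hw => (hd w (hrU hw)).differentiableWithinAt) (fun _ _ _ => rfl) z
      (mem_ball_self hr)
  have hb' : ∀ z : ℂ, ‖z‖ ≠ 1 → ‖G' z‖ ≤ 1 / |‖z‖ - 1| := by
    intro z hz; rw [hG'A z hz]; exact hb z hz
  have hcl : IsClosed {z | ¬ reg z} := by
    rw [← isOpen_compl_iff, Metric.isOpen_iff]
    intro z hz
    simp only [Set.mem_compl_iff, Set.mem_ofPred_eq, not_not] at hz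
    obtain ⟨r, hr, F, hF, hFG⟩ := hz
    refine ⟨r, hr, fun w hw => ?_⟩
    simp only [Set.mem_compl_iff, Set.mem_ofPred_eq, not_not]
    obtain ⟨s, hs, hsub⟩ := Metric.isOpen_iff.1 (isOpen_ball (x := z) (ε := r)) w hw
    exact ⟨s, hs, F, hF.mono hsub, fun u hu => hFG u (hsub hu)⟩
  have hsubS : {z | ¬ reg z} ⊆ S := by
    intro z hz; by_contra h; exact hz (hregS z h)
  rcases Set.eq_empty_or_nonempty {z | ¬ reg z} with he | hn
  · exfalso
    have hall : Differentiable ℂ G' := by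
      intro z; apply hG'd; by_contra h
      have : z ∈ {z | ¬ reg z} := h
      rw [he] at this; exact this
    have ht : Tendsto G' (cocompact ℂ) (𝓝 0) := by
      have h1 : Tendsto (fun z : ℂ => 1 / (‖z‖ - 1)) (cocompact ℂ) (𝓝 0) := by
        simp only [one_div]
        exact tendsto_inv_atTop_zero.comp
          (tendsto_atTop_add_const_right _ (-1) (tendsto_norm_cocompact_atTop (E := ℂ)))
      refine squeeze_zero_norm' ?_ h1
      filter_upwards [(tendsto_norm_cocompact_atTop (E := ℂ)).eventually_gt_atTop 1] with z hz
      have := hb' z hz.ne'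
      rwa [abs_of_pos (by linarith)] at this
    obtain ⟨z, hz, hz2⟩ := hne
    rw [← hG'A z hz, hall.apply_eq_of_tendsto_cocompact z ht] at hz2
    exact hz2 rfl
  · obtain ⟨l, hl, r, hr, hr1, hiso⟩ := aux_isolated _ hcl (hS.mono hsubS) hn
    have hl1 : ‖l‖ = 1 := hS1 l (hsubS hl)
    have hd' : ∀ z, z ≠ l → dist z l < r → DifferentiableAt ℂ G' z := by
      intro z h1 h2
      have := hiso z h1 h2
      exact hG'd z (by simpa using this)
    have hbd := aux_bound G' hb' l hl1 r hr1 hd'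
    set h : ℂ → E := fun z => (z - l) • G' z with hh
    have hdiff : ∀ z, z ≠ l → dist z l < r → DifferentiableAt ℂ h z := fun z h1 h2 =>
      (differentiableAt_id.sub_const l).smul (hd' z h1 h2)
    have hl0 : h l = 0 := by simp [hh]
    have hlim := Complex.tendsto_limUnder_of_differentiable_on_punctured_nhds_of_bounded_under
      (f := h) (c := l) (by
        filter_upwards [self_mem_nhdsWithin, nhdsWithin_le_nhds (ball_mem_nhds l hr)] with z h1 h2
          using hdiff z h1 h2) ⟨18, by
        rw [eventually_map]
        filter_upwards [self_mem_nhdsWithin,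
          nhdsWithin_le_nhds (ball_mem_nhds l (show 0 < r / 4 by linarith))] with z h1 h2
        rw [hl0, sub_zero]; exact hbd z h1 h2⟩
    refine ⟨l, hl1, limUnder (𝓝[≠] l) h, ?_, ?_⟩
    · intro h0
      rw [h0] at hlim
      apply hl
      have hc : ContinuousAt h l := by
        rw [← continuousWithinAt_compl_self, ContinuousWithinAt, hl0]; exact hlim
      have hon : DifferentiableOn ℂ h (ball l r) := by
        rw [← Complex.differentiableOn_compl_singleton_and_continuousAt_iff (ball_mem_nhds l hr)]
        exact ⟨fun z hz => (hdiff z hz.2 hz.1).differentiableWithinAt, hc⟩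
      rw [← Complex.differentiableOn_dslope (ball_mem_nhds l hr)] at hon
      refine ⟨r, hr, _, hon, fun w hw hwA => ?_⟩
      have hwl : w ≠ l := by rintro rfl; exact hwA hl1
      rw [dslope_of_ne _ hwl, slope_def_module, hl0, sub_zero, hh]
      simp only
      rw [smul_smul, inv_mul_cancel₀ (sub_ne_zero.2 hwl), one_smul, hG'A w hwA]
    · have h2 : Tendsto h (𝓝[A] l) (𝓝 (limUnder (𝓝[≠] l) h)) :=
        hlim.mono_left (nhdsWithin_mono _ (by rintro z hz rfl; exact hz hl1))
      refine h2.congr' ?_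
      filter_upwards [self_mem_nhdsWithin] with z hz
      rw [hh]; simp only; rw [hG'A z hz]

theorem aux_isom_spectrum {Z : Type*} [NormedAddCommGroup Z] [NormedSpace ℂ Z] [CompleteSpace Z]
    (V W : Z →L[ℂ] Z) (hVW : V * W = 1) (hWV : W * V = 1)
    (hV : ∀ z, ‖V z‖ ≤ ‖z‖) (hW : ∀ z, ‖W z‖ ≤ ‖z‖) (z : ℂ) (hz : ‖z‖ ≠ 1) :
    z ∈ resolventSet ℂ V := by
  have hV1 : ‖V‖ ≤ 1 := ContinuousLinearMap.opNorm_le_bound _ zero_le_one (by simpa using hV)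
  have hW1 : ‖W‖ ≤ 1 := ContinuousLinearMap.opNorm_le_bound _ zero_le_one (by simpa using hW)
  rcases lt_or_gt_of_ne hz with h | h
  · have h1 : IsUnit (1 - z • W) := by
      apply isUnit_one_sub_of_norm_lt_one
      rw [norm_smul]
      calc ‖z‖ * ‖W‖ ≤ ‖z‖ * 1 := by gcongr
        _ < 1 := by linarith
    have hVu : IsUnit V := ⟨⟨V, W, hVW, hWV⟩, rfl⟩
    have h2 : algebraMap ℂ (Z →L[ℂ] Z) z - V = -(V * (1 - z • W)) := by
      rw [mul_sub, mul_one, mul_smul_comm, hVW, Algebra.algebraMap_eq_smul_one]; abel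
    rw [spectrum.mem_resolventSet_iff, h2]
    exact (hVu.mul h1).neg
  · have hz0 : z ≠ 0 := by rintro rfl; simp at h; linarith
    have h1 : IsUnit (1 - z⁻¹ • V) := by
      apply isUnit_one_sub_of_norm_lt_one
      rw [norm_smul, norm_inv]
      calc ‖z‖⁻¹ * ‖V‖ ≤ ‖z‖⁻¹ * 1 := by gcongr
        _ < 1 := by rw [mul_one]; exact inv_lt_one_of_one_lt₀ h
    have h2 : algebraMap ℂ (Z →L[ℂ] Z) z - V = algebraMap ℂ (Z →L[ℂ] Z) z * (1 - z⁻¹ • V) := by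
      rw [mul_sub, mul_one, Algebra.algebraMap_eq_smul_one, smul_mul_assoc, one_mul, smul_smul,
        mul_inv_cancel₀ hz0, one_smul]
    rw [spectrum.mem_resolventSet_iff, h2]
    exact ((IsUnit.mk0 z hz0).map (algebraMap ℂ (Z →L[ℂ] Z))).mul h1

theorem aux_eigen {X Z : Type*} [NormedAddCommGroup X] [NormedSpace ℂ X] [CompleteSpace X]
    [NormedAddCommGroup Z] [NormedSpace ℂ Z] [CompleteSpace Z]
    (T : X →L[ℂ] X) (V W : Z →L[ℂ] Z) (hVW : V * W = 1) (hWV : W * V = 1)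
    (hV : ∀ z, ‖V z‖ ≤ ‖z‖) (hW : ∀ z, ‖W z‖ ≤ ‖z‖) (J : X →L[ℂ] Z)
    (hJT : ∀ x, J (T x) = V (J x))
    (hσ : (spectrum ℂ T ∩ {lam : ℂ | ‖lam‖ = 1}).Countable) (x₀ : X) (hx₀ : J x₀ ≠ 0) :
    ∃ l : ℂ, ‖l‖ = 1 ∧ ∃ L : X →L[ℂ] Z, L ≠ 0 ∧ (∀ x, J x = 0 → L x = 0) ∧
      ∀ x, L (T x) = l • L x := by
  classical
  have hJ0 : ‖J‖ ≠ 0 := by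
    intro h; apply hx₀; rw [norm_eq_zero] at h; rw [h]; rfl
  have hJT' : J ∘L T = V ∘L J := by ext x; exact hJT x
  have hVn : ∀ z, ‖V z‖ = ‖z‖ := by
    intro z
    refine le_antisymm (hV z) ?_
    have : W (V z) = z := by
      have := congrArg (fun A : Z →L[ℂ] Z => A z) hWV; simpa using this
    calc ‖z‖ = ‖W (V z)‖ := by rw [this]
      _ ≤ _ := hW _
  have hres := aux_isom_spectrum V W hVW hWV hV hW
  let G : ℂ → (X →L[ℂ] Z) := fun z => if ‖z‖ = 1 then J ∘L (resolvent T z) else (resolvent V z) ∘L J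
  have hrV : ∀ z, ‖z‖ ≠ 1 → (resolvent V z) * (algebraMap ℂ (Z →L[ℂ] Z) z - V) = 1 := by
    intro z hz
    exact Ring.inverse_mul_cancel _ (hres z hz)
  have hrV' : ∀ z, ‖z‖ ≠ 1 → (algebraMap ℂ (Z →L[ℂ] Z) z - V) * (resolvent V z) = 1 := by
    intro z hz
    exact Ring.mul_inverse_cancel _ (hres z hz)
  have hrT' : ∀ z, z ∈ resolventSet ℂ T → (algebraMap ℂ (X →L[ℂ] X) z - T) * (resolvent T z) = 1 := by
    intro z hz
    exact Ring.mul_inverse_cancel _ hz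
  have hGV : ∀ z, ‖z‖ ≠ 1 → G z = (resolvent V z) ∘L J := fun z hz => if_neg hz
  have hGT : ∀ z ∈ resolventSet ℂ T, G z = J ∘L (resolvent T z) := by
    intro z hz
    by_cases h : ‖z‖ = 1
    · exact if_pos h
    · rw [hGV z h]
      have h1 : (algebraMap ℂ (Z →L[ℂ] Z) z - V) ∘L J = J ∘L (algebraMap ℂ (X →L[ℂ] X) z - T) := by
        ext x; simp [Algebra.algebraMap_eq_smul_one, hJT]
      calc (resolvent V z) ∘L J = (resolvent V z) ∘L (J ∘L ((algebraMap ℂ (X →L[ℂ] X) z - T) * (resolvent T z))) := by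
            rw [hrT' z hz]; ext; simp
        _ = (resolvent V z) ∘L ((J ∘L (algebraMap ℂ (X →L[ℂ] X) z - T)) ∘L (resolvent T z)) := by
            ext; simp
        _ = ((resolvent V z) * (algebraMap ℂ (Z →L[ℂ] Z) z - V)) ∘L (J ∘L (resolvent T z)) := by
            rw [← h1]; ext; simp
        _ = _ := by rw [hrV z h]; ext; simp
  have hGb : ∀ z, ‖z‖ ≠ 1 → ‖G z‖ ≤ ‖J‖ / |‖z‖ - 1| := by
    intro z hz
    have hpos : 0 < |‖z‖ - 1| := abs_pos.2 (sub_ne_zero.2 hz)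
    refine ContinuousLinearMap.opNorm_le_bound _ (by positivity) fun x => ?_
    rw [div_mul_eq_mul_div, le_div_iff₀ hpos]
    have h1 : z • G z x - V (G z x) = J x := by
      have := congrArg (fun A : Z →L[ℂ] Z => A (J x)) (hrV' z hz)
      rw [hGV z hz]
      simpa [Algebra.algebraMap_eq_smul_one] using this
    have h2 : |‖z • G z x‖ - ‖V (G z x)‖| ≤ ‖J x‖ := by rw [← h1]; exact abs_norm_sub_norm_le _ _
    rw [hVn, norm_smul] at h2
    have h3 : |‖z‖ * ‖G z x‖ - ‖G z x‖| = ‖G z x‖ * |‖z‖ - 1| := by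
      rw [show ‖z‖ * ‖G z x‖ - ‖G z x‖ = ‖G z x‖ * (‖z‖ - 1) by ring, abs_mul, abs_norm]
    rw [← h3]
    exact h2.trans (J.le_opNorm x)
  set S := spectrum ℂ T ∩ {lam : ℂ | ‖lam‖ = 1} with hSdef
  have hSc : IsClosed S := (spectrum.isClosed T).inter (isClosed_eq continuous_norm continuous_const)
  have hGd : ∀ z, z ∉ S → DifferentiableAt ℂ G z := by
    intro z hz
    by_cases h : ‖z‖ = 1
    · have hzT : z ∈ resolventSet ℂ T := by
        by_contra h2; exact hz ⟨h2, h⟩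
      have h3 : DifferentiableAt ℂ (fun z => (ContinuousLinearMap.compL ℂ X X Z J) (resolvent T z)) z :=
        (ContinuousLinearMap.compL ℂ X X Z J).differentiableAt.comp z
          (spectrum.hasDerivAt_resolvent_const_left hzT).differentiableAt
      refine h3.congr_of_eventuallyEq ?_
      filter_upwards [(spectrum.isOpen_resolventSet T).mem_nhds hzT] with w hw
      rw [hGT w hw]; rfl
    · have h3 : DifferentiableAt ℂ (fun z => ((ContinuousLinearMap.compL ℂ X Z Z).flip J) (resolvent V z)) z :=
        ((ContinuousLinearMap.compL ℂ X Z Z).flip J).differentiableAt.comp z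
          (spectrum.hasDerivAt_resolvent_const_left (hres z h)).differentiableAt
      refine h3.congr_of_eventuallyEq ?_
      have ho : IsOpen {w : ℂ | ‖w‖ ≠ 1} := isOpen_ne_fun continuous_norm continuous_const
      filter_upwards [ho.mem_nhds h] with w hw
      rw [hGV w hw]; rfl
  have hcJ : ((‖J‖ : ℂ))⁻¹ ≠ 0 := by simpa using hJ0
  obtain ⟨l, hl, L, hL, hlim⟩ := aux_complex (fun z => ((‖J‖ : ℂ))⁻¹ • G z) (by
      intro z hz
      rw [norm_smul, norm_inv, Complex.norm_real, norm_norm]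
      calc ‖J‖⁻¹ * ‖G z‖ ≤ ‖J‖⁻¹ * (‖J‖ / |‖z‖ - 1|) := by gcongr; exact hGb z hz
        _ = _ := by field_simp) S hSc (fun z hz => hz.2) hσ (fun z hz => (hGd z hz).const_smul ((‖J‖ : ℂ))⁻¹) (by
      refine ⟨0, by simp, fun h => hx₀ ?_⟩
      have h0 : G 0 = 0 := (smul_eq_zero.1 h).resolve_left hcJ
      rw [hGV 0 (by simp)] at h0
      have := congrArg (fun A : Z →L[ℂ] Z => A (J x₀)) (hrV' 0 (by simp))
      have h2 : resolvent V (0:ℂ) (J x₀) = 0 := congrArg (fun A : X →L[ℂ] Z => A x₀) h0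
      simp only [mul_apply_eq_comp, h2] at this
      simpa using this.symm)
  have hnb := aux_nebot l
  have happ : ∀ x, Tendsto (fun z => ((z - l) • (((‖J‖ : ℂ))⁻¹ • G z)) x)
      (𝓝[{w : ℂ | ‖w‖ ≠ 1}] l) (𝓝 (L x)) := by
    intro x
    exact ((ContinuousLinearMap.apply ℂ Z x).continuous.tendsto L).comp hlim
  refine ⟨l, hl, L, hL, fun x hx => ?_, fun x => ?_⟩
  · refine tendsto_nhds_unique (happ x) (tendsto_const_nhds.congr' ?_)
    filter_upwards [self_mem_nhdsWithin] with z hz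
    rw [hGV z hz]; simp [hx]
  · have h1 : Tendsto (fun z => z • ((z - l) • (((‖J‖ : ℂ))⁻¹ • G z)) x - (z - l) • (((‖J‖ : ℂ))⁻¹ • J x))
        (𝓝[{w : ℂ | ‖w‖ ≠ 1}] l) (𝓝 (l • L x - (l - l) • (((‖J‖ : ℂ))⁻¹ • J x))) := by
      have hid : Tendsto (fun z : ℂ => z) (𝓝[{w : ℂ | ‖w‖ ≠ 1}] l) (𝓝 l) := nhdsWithin_le_nhds
      exact (hid.smul (happ x)).sub ((hid.sub_const l).smul_const _)
    rw [sub_self, zero_smul, sub_zero] at h1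
    refine tendsto_nhds_unique (happ (T x)) (h1.congr' ?_)
    filter_upwards [self_mem_nhdsWithin] with z hz
    have h2 : G z (T x) = z • G z x - J x := by
      rw [hGV z hz]
      have := congrArg (fun A : Z →L[ℂ] Z => A (J x)) (hrV z hz)
      simp only [mul_apply_eq_comp, sub_apply, map_sub,
        Algebra.algebraMap_eq_smul_one, smul_apply, map_smul,
        one_apply_eq_self] at this
      simp only [ContinuousLinearMap.comp_apply, hJT]
      rw [eq_sub_iff_add_eq, add_comm, ← eq_sub_iff_add_eq]; exact this.symm
    simp only [smul_apply, h2]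
    module


theorem aux_minimal {X : Type*} [NormedAddCommGroup X] [NormedSpace ℂ X] [CompleteSpace X]
    (T : X →L[ℂ] X) (C : ℝ) (hC : ∀ (n : ℕ) x, ‖(T ^ n) x‖ ≤ C * ‖x‖) (x : X)
    (hx : IsCompact (closure (toWeakSpace ℂ X '' Set.range (fun n : ℕ => (T ^ n) x)))) :
    ∃ m : X, toWeakSpace ℂ X m ∈ closure (toWeakSpace ℂ X '' Set.range (fun n : ℕ => (T ^ n) x)) ∧
      TotallyBounded (Set.range (fun n : ℕ => (T ^ n) m)) := by
  set e := toWeakSpace ℂ X with he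
  set K := closure (e '' Set.range (fun n : ℕ => (T ^ n) x)) with hK
  let Tw : WeakSpace ℂ X →L[ℂ] WeakSpace ℂ X := WeakSpace.map T
  have hTw : ∀ y, Tw (e y) = e (T y) := fun y => rfl
  have hTwn : ∀ (n : ℕ) y, Tw^[n] (e y) = e ((T ^ n) y) := by
    intro n
    induction n with
    | zero => intro y; rfl
    | succ k ih => intro y; rw [Function.iterate_succ_apply, hTw, ih, pow_succ]; rfl
  have hTc : Continuous Tw := Tw.continuous
  let F : Set (Set (WeakSpace ℂ X)) := {M | IsClosed M ∧ M.Nonempty ∧ M ⊆ K ∧ Set.MapsTo Tw M M}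
  have hKF : K ∈ F := by
    refine ⟨isClosed_closure, ⟨e x, subset_closure ⟨x, ⟨0, by simp⟩, rfl⟩⟩, subset_rfl, ?_⟩
    apply Set.MapsTo.closure _ hTc
    rintro _ ⟨_, ⟨n, rfl⟩, rfl⟩
    rw [hTw]
    exact ⟨_, ⟨n + 1, by simp only [pow_succ']; rfl⟩, rfl⟩
  have hcomp : ∀ M ∈ F, IsCompact M := fun M hM => hx.of_isClosed_subset hM.1 hM.2.2.1
  obtain ⟨M, hMK, hMmin⟩ := zorn_superset_nonempty F (by
    intro c hcF hchain hne
    refine ⟨⋂₀ c, ⟨isClosed_sInter fun t ht => (hcF ht).1, ?_, ?_, ?_⟩,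
      fun s hs => Set.sInter_subset_of_mem hs⟩
    · have : Nonempty c := hne.to_subtype
      exact IsCompact.nonempty_sInter_of_directed_nonempty_isCompact_isClosed
        (fun a ha b hb => (hchain.total ha hb).elim (fun h => ⟨a, ha, subset_rfl, h⟩)
          (fun h => ⟨b, hb, h, subset_rfl⟩)) (fun U hU => (hcF hU).2.1) (fun U hU => hcomp U (hcF hU))
        (fun U hU => (hcF hU).1)
    · obtain ⟨s, hs⟩ := hne
      exact (Set.sInter_subset_of_mem hs).trans (hcF hs).2.2.1
    · intro y hy s hs
      exact (hcF hs).2.2.2 (hy s hs)) K hKF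
  obtain ⟨hMc, hMne, -, hMT⟩ := hMmin.prop
  have hMcomp : IsCompact M := hcomp M hMmin.prop
  have hmineq : ∀ N, N ⊆ M → IsClosed N → N.Nonempty → Set.MapsTo Tw N N → N = M := by
    intro N h1 h2 h3 h4
    exact (hMmin.eq_of_subset ⟨h2, h3, h1.trans hMK, h4⟩ h1).symm ▸ rfl
  have hTM : Tw '' M = M := by
    refine hmineq _ hMT.image_subset (hMcomp.image hTc).isClosed (hMne.image _) ?_
    rintro _ ⟨y, hy, rfl⟩
    exact ⟨Tw y, hMT hy, rfl⟩
  have hTnM : ∀ n, Tw^[n] '' M = M := by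
    intro n
    induction n with
    | zero => simp
    | succ k ih => rw [Function.iterate_succ, Set.image_comp, hTM, ih]
  have hMTn : ∀ n, ∀ y ∈ M, Tw^[n] y ∈ M := fun n y hy => hMT.iterate n hy
  -- separability
  let X0 : Submodule ℂ X := (Submodule.span ℂ (Set.range (fun n : ℕ => (T ^ n) x))).topologicalClosure
  have hsep : TopologicalSpace.IsSeparable (X0 : Set X) := by
    have h1 : TopologicalSpace.IsSeparable (Set.range (fun n : ℕ => (T ^ n) x)) :=
      (Set.countable_range _).isSeparable
    exact (h1.span (R := ℂ)).closure
  have hballc : ∀ d ε, IsClosed (e '' closedBall d ε) := by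
    intro d ε
    have := (convex_closedBall d ε).toWeakSpace_closure ℂ
    rw [isClosed_closedBall.closure_eq] at this
    rw [he, this]; exact isClosed_closure
  have hKX0 : K ⊆ e '' X0 := by
    have h0 : Convex ℝ (X0 : Set X) := (X0.restrictScalars ℝ).convex
    have := h0.toWeakSpace_closure ℂ
    rw [(Submodule.isClosed_topologicalClosure _).closure_eq] at this
    rw [he, this]
    apply closure_mono
    apply Set.image_mono
    exact Submodule.subset_span.trans (Submodule.le_topologicalClosure _)
  obtain ⟨D, hDc, hD⟩ := hsep
  have hC0 : 0 ≤ |C| := abs_nonneg C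
  have htb : TotallyBounded (e ⁻¹' M) := by
    rw [Metric.totallyBounded_iff]
    intro ε hε
    obtain ⟨δ, hδ, hδε⟩ : ∃ δ > 0, C * δ < ε := by
      refine ⟨ε / (2 * (|C| + 1)), by positivity, ?_⟩
      calc C * (ε / (2 * (|C| + 1))) ≤ |C| * (ε / (2 * (|C| + 1))) := by gcongr; exact le_abs_self C
        _ < ε := by
          rw [← mul_div_assoc, div_lt_iff₀ (by positivity)]; nlinarith
    have : CompactSpace M := isCompact_iff_compactSpace.1 hMcomp
    have : Nonempty M := hMne.to_subtype
    have : Countable D := hDc.to_subtype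
    obtain ⟨d, u, hu⟩ := nonempty_interior_of_iUnion_of_closed (X := M)
      (f := fun d : D => Subtype.val ⁻¹' (e '' closedBall d.1 δ))
      (fun d => (hballc d.1 δ).preimage continuous_subtype_val) (by
        ext ⟨y, hy⟩
        simp only [Set.mem_iUnion, Set.mem_preimage, Set.mem_univ, iff_true]
        obtain ⟨w, hw, rfl⟩ := hKX0 (hMK hy)
        obtain ⟨d, hdD, hd⟩ := Metric.mem_closure_iff.1 (hD hw) δ hδ
        exact ⟨⟨d, hdD⟩, w, hd.le, rfl⟩)
    obtain ⟨O, hO, hOeq⟩ := isOpen_induced_iff.1 (isOpen_interior (s := (Subtype.val ⁻¹' (e '' closedBall d.1 δ) : Set M)))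
    have huO : u.1 ∈ O := by
      have : u ∈ Subtype.val ⁻¹' O := by rw [hOeq]; exact hu
      exact this
    have hOM : ∀ y ∈ M, y ∈ O → y ∈ e '' closedBall d.1 δ := by
      intro y hy hyO
      have : (⟨y, hy⟩ : M) ∈ (Subtype.val ⁻¹' O : Set M) := hyO
      rw [hOeq] at this
      have h := interior_subset this
      exact h
    have hcover : M ⊆ ⋃ n : ℕ, Tw^[n] ⁻¹' O := by
      by_contra hnot
      obtain ⟨y, hyM, hy⟩ := Set.not_subset.1 hnot
      have hN := hmineq (M ∩ (⋃ n : ℕ, Tw^[n] ⁻¹' O)ᶜ) Set.inter_subset_left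
        (hMc.inter (isOpen_iUnion fun n => hO.preimage (hTc.iterate n)).isClosed_compl)
        ⟨y, hyM, hy⟩ (by
          rintro w ⟨hw, hw2⟩
          refine ⟨hMT hw, fun h => hw2 ?_⟩
          obtain ⟨n, hn⟩ := Set.mem_iUnion.1 h
          exact Set.mem_iUnion.2 ⟨n + 1, hn⟩)
      have : u.1 ∈ M ∩ (⋃ n : ℕ, Tw^[n] ⁻¹' O)ᶜ := by rw [hN]; exact u.2
      exact this.2 (Set.mem_iUnion.2 ⟨0, huO⟩)
    obtain ⟨t, ht⟩ := hMcomp.elim_finite_subcover _ (fun n => hO.preimage (hTc.iterate n)) hcover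
    refine ⟨(fun j : ℕ => (T ^ j) d.1) '' (Finset.range (t.sup id + 1) : Set ℕ),
      (Finset.finite_toSet _).image _, ?_⟩
    intro y hy
    have hy' : e y ∈ Tw^[t.sup id] '' M := by rw [hTnM]; exact hy
    obtain ⟨w, hw, hwy⟩ := hy'
    obtain ⟨n, hn⟩ := Set.mem_iUnion.1 (ht hw)
    obtain ⟨hnt, hnO⟩ := Set.mem_iUnion.1 hn
    have hle : n ≤ t.sup id := Finset.le_sup (f := id) hnt
    obtain ⟨b, hb, hbe⟩ := hOM _ (hMTn n w hw) hnO
    have hyb : y = (T ^ (t.sup id - n)) b := by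
      apply e.injective
      rw [← hTwn, hbe, ← Function.iterate_add_apply, Nat.sub_add_cancel hle, hwy]
    simp only [Set.mem_iUnion]
    refine ⟨(T ^ (t.sup id - n)) d.1, ⟨t.sup id - n, by simp, rfl⟩, ?_⟩
    rw [mem_ball, dist_eq_norm, hyb, ← map_sub]
    rw [mem_closedBall, dist_eq_norm] at hb
    have hCn : 0 ≤ C ∨ ‖b - d.1‖ = 0 := by
      by_contra! h
      have h1 := hC 0 (b - d.1)
      have h2 : 0 < ‖b - d.1‖ := lt_of_le_of_ne (norm_nonneg _) (Ne.symm h.2)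
      have := norm_nonneg ((T ^ 0) (b - d.1))
      nlinarith [h.1]
    refine (hC _ _).trans_lt ?_
    rcases hCn with h | h
    · exact lt_of_le_of_lt (by gcongr) hδε
    · rw [h]; simpa using hε
  obtain ⟨m, hm⟩ := hMne
  refine ⟨e.symm m, by simpa using hMK hm, htb.subset ?_⟩
  rintro _ ⟨n, rfl⟩
  change e ((T ^ n) (e.symm m)) ∈ M
  rw [← hTwn]; simpa using hMTn n m hm


open scoped BoundedContinuousFunction

/-- Bounded sequences with totally bounded range. -/
def auxTB (X : Type*) [NormedAddCommGroup X] [NormedSpace ℂ X] : Submodule ℂ (ℕ →ᵇ X) where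
  carrier := {f | TotallyBounded (Set.range f)}
  add_mem' := by
    intro f g hf hg
    have hf' : TotallyBounded (Set.range f) := hf
    have hg' : TotallyBounded (Set.range g) := hg
    change TotallyBounded (Set.range (f + g))
    rw [Metric.totallyBounded_iff] at hf' hg' ⊢
    intro ε hε
    obtain ⟨s, hs, hfs⟩ := hf' (ε / 2) (by linarith)
    obtain ⟨t, ht, hgt⟩ := hg' (ε / 2) (by linarith)
    refine ⟨Set.image2 (fun a b => a + b) s t, hs.image2 _ ht, ?_⟩
    rintro _ ⟨n, rfl⟩
    have h1 := hfs ⟨n, rfl⟩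
    have h2 := hgt ⟨n, rfl⟩
    simp only [Set.mem_iUnion, mem_ball] at h1 h2 ⊢
    obtain ⟨a, ha, hda⟩ := h1
    obtain ⟨b, hb, hdb⟩ := h2
    refine ⟨a + b, ⟨a, ha, b, hb, rfl⟩, ?_⟩
    have h3 := dist_add_add_le (f n) (g n) a b
    have h4 : (f + g) n = f n + g n := rfl
    rw [h4]
    linarith
  zero_mem' := by
    refine (totallyBounded_singleton (0 : X)).subset ?_
    rintro _ ⟨n, rfl⟩; rfl
  smul_mem' := by
    intro c f hf
    have hf' : TotallyBounded (Set.range f) := hf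
    have h := hf'.image (f := fun p : X => c • p) (uniformContinuous_const_smul c)
    refine h.subset ?_
    rintro _ ⟨n, rfl⟩
    exact ⟨f n, ⟨n, rfl⟩, rfl⟩

theorem mem_auxTB {X : Type*} [NormedAddCommGroup X] [NormedSpace ℂ X] (f : ℕ →ᵇ X) :
    f ∈ auxTB X ↔ TotallyBounded (Set.range f) := Iff.rfl

theorem auxTB_closed (X : Type*) [NormedAddCommGroup X] [NormedSpace ℂ X] :
    IsClosed (auxTB X : Set (ℕ →ᵇ X)) := by
  apply isClosed_of_closure_subset
  intro f hf
  change TotallyBounded (Set.range f)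
  rw [Metric.totallyBounded_iff]
  intro ε hε
  obtain ⟨g, hg, hfg⟩ := Metric.mem_closure_iff.1 hf (ε / 2) (by linarith)
  obtain ⟨t, ht, hsub⟩ := Metric.totallyBounded_iff.1 ((mem_auxTB g).1 hg) (ε / 2) (by linarith)
  refine ⟨t, ht, ?_⟩
  rintro _ ⟨n, rfl⟩
  have h1 := hsub ⟨n, rfl⟩
  simp only [Set.mem_iUnion, mem_ball] at h1 ⊢
  obtain ⟨y, hy, hd⟩ := h1
  refine ⟨y, hy, ?_⟩
  have h2 := BoundedContinuousFunction.dist_coe_le_dist (f := f) (g := g) n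
  have h3 := dist_triangle (f n) (g n) y
  linarith

/-- backward shift -/
noncomputable def auxS (X : Type*) [NormedAddCommGroup X] [NormedSpace ℂ X] :
    (ℕ →ᵇ X) →L[ℂ] (ℕ →ᵇ X) :=
  LinearMap.mkContinuous
    { toFun := fun f => f.compContinuous ⟨Nat.succ, continuous_of_discreteTopology⟩
      map_add' := fun _ _ => rfl
      map_smul' := fun _ _ => rfl } 1 (by
      intro f
      rw [one_mul, BoundedContinuousFunction.norm_le (norm_nonneg f)]
      intro n
      exact f.norm_coe_le_norm (n + 1))

theorem auxS_apply {X : Type*} [NormedAddCommGroup X] [NormedSpace ℂ X] (f : ℕ →ᵇ X) (n : ℕ) :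
    auxS X f n = f (n + 1) := rfl

theorem auxS_norm {X : Type*} [NormedAddCommGroup X] [NormedSpace ℂ X] (f : ℕ →ᵇ X) :
    ‖auxS X f‖ ≤ ‖f‖ := by
  rw [BoundedContinuousFunction.norm_le (norm_nonneg f)]
  intro n
  exact f.norm_coe_le_norm (n + 1)

/-- forward shift of functions -/
def auxFw {X : Type*} [Zero X] (f : ℕ → X) : ℕ → X
  | 0 => 0
  | n + 1 => f n

theorem auxFw_norm {X : Type*} [NormedAddCommGroup X] [NormedSpace ℂ X] (f : ℕ →ᵇ X) :
    ∀ n, ‖auxFw f n‖ ≤ ‖f‖ := by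
  rintro (_ | n)
  · simp [auxFw]
  · exact f.norm_coe_le_norm n

/-- forward shift -/
noncomputable def auxR (X : Type*) [NormedAddCommGroup X] [NormedSpace ℂ X] :
    (ℕ →ᵇ X) →L[ℂ] (ℕ →ᵇ X) :=
  LinearMap.mkContinuous
    { toFun := fun f => BoundedContinuousFunction.ofNormedAddCommGroup (auxFw f)
        continuous_of_discreteTopology ‖f‖ (auxFw_norm f)
      map_add' := by
        intro f g
        ext n
        rcases n with _ | n <;> simp [auxFw]
      map_smul' := by
        intro c f
        ext n
        rcases n with _ | n <;> simp [auxFw] } 1 (by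
      intro f
      rw [one_mul]
      exact BoundedContinuousFunction.norm_ofNormedAddCommGroup_le _ (norm_nonneg f) (auxFw_norm f))

theorem auxR_apply {X : Type*} [NormedAddCommGroup X] [NormedSpace ℂ X] (f : ℕ →ᵇ X) (n : ℕ) :
    auxR X f n = auxFw f n := rfl

theorem auxR_norm {X : Type*} [NormedAddCommGroup X] [NormedSpace ℂ X] (f : ℕ →ᵇ X) :
    ‖auxR X f‖ ≤ ‖f‖ := BoundedContinuousFunction.norm_ofNormedAddCommGroup_le _ (norm_nonneg f) (auxFw_norm f)

theorem auxS_mem {X : Type*} [NormedAddCommGroup X] [NormedSpace ℂ X] (f : ℕ →ᵇ X)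
    (hf : f ∈ auxTB X) : auxS X f ∈ auxTB X := by
  rw [mem_auxTB] at *
  refine hf.subset ?_
  rintro _ ⟨n, rfl⟩
  exact ⟨n + 1, rfl⟩

theorem auxR_mem {X : Type*} [NormedAddCommGroup X] [NormedSpace ℂ X] (f : ℕ →ᵇ X)
    (hf : f ∈ auxTB X) : auxR X f ∈ auxTB X := by
  rw [mem_auxTB] at *
  refine (hf.union (totallyBounded_singleton (0 : X))).subset ?_
  rintro _ ⟨_ | n, rfl⟩
  · right; rfl
  · left; exact ⟨n, rfl⟩

/-- descent to the quotient -/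
noncomputable def auxQ {X : Type*} [NormedAddCommGroup X] [NormedSpace ℂ X]
    (A : (ℕ →ᵇ X) →L[ℂ] (ℕ →ᵇ X)) (hA : ∀ f ∈ auxTB X, A f ∈ auxTB X) :
    ((ℕ →ᵇ X) ⧸ auxTB X) →L[ℂ] ((ℕ →ᵇ X) ⧸ auxTB X) :=
  (auxTB X).liftQL ((auxTB X).mkQL ∘L A) (by
    intro f hf
    change (auxTB X).mkQ (A f) = 0
    rw [Submodule.mkQ_apply, Submodule.Quotient.mk_eq_zero]
    exact hA f hf)

theorem auxQ_mk {X : Type*} [NormedAddCommGroup X] [NormedSpace ℂ X]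
    (A : (ℕ →ᵇ X) →L[ℂ] (ℕ →ᵇ X)) (hA : ∀ f ∈ auxTB X, A f ∈ auxTB X) (f : ℕ →ᵇ X) :
    auxQ A hA (Submodule.Quotient.mk f) = Submodule.Quotient.mk (A f) := rfl

theorem auxQ_norm {X : Type*} [NormedAddCommGroup X] [NormedSpace ℂ X]
    (A : (ℕ →ᵇ X) →L[ℂ] (ℕ →ᵇ X)) (hA : ∀ f ∈ auxTB X, A f ∈ auxTB X)
    (hn : ∀ f, ‖A f‖ ≤ ‖f‖) (z : (ℕ →ᵇ X) ⧸ auxTB X) : ‖auxQ A hA z‖ ≤ ‖z‖ := by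
  refine le_of_forall_pos_le_add fun ε hε => ?_
  obtain ⟨f, rfl, hf⟩ := Submodule.Quotient.norm_mk_lt z hε
  rw [auxQ_mk]
  exact (Submodule.Quotient.norm_mk_le (auxTB X) (A f)).trans ((hn f).trans hf.le)

theorem aux_powerbounded {X : Type*} [NormedAddCommGroup X] [NormedSpace ℂ X] [CompleteSpace X]
    (T : X →L[ℂ] X)
    (hwap : ∀ x : X, IsCompact (closure
      (toWeakSpace ℂ X '' Set.range (fun n : ℕ => (T ^ n) x)))) :
    ∃ C : ℝ, ∀ (n : ℕ) x, ‖(T ^ n) x‖ ≤ C * ‖x‖ := by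
  have h1 : ∀ x, ∃ C, ∀ n : ℕ, ‖(T ^ n) x‖ ≤ C := by
    intro x
    obtain ⟨C, hC⟩ := banach_steinhaus
      (g := fun n : ℕ => NormedSpace.inclusionInDoubleDual ℂ X ((T ^ n) x)) (by
        intro f
        have hf : Continuous (fun y : WeakSpace ℂ X => f ((toWeakSpace ℂ X).symm y)) :=
          WeakBilin.eval_continuous (topDualPairing ℂ X).flip f
        obtain ⟨C, hC⟩ := ((hwap x).image hf).isBounded.exists_norm_le
        refine ⟨C, fun n => ?_⟩
        exact hC _ ⟨toWeakSpace ℂ X ((T ^ n) x), subset_closure ⟨_, ⟨n, rfl⟩, rfl⟩, rfl⟩)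
    refine ⟨C, fun n => ?_⟩
    have := hC n
    rwa [← (NormedSpace.inclusionInDoubleDualLi (E := X) ℂ).norm_map]
  obtain ⟨C, hC⟩ := banach_steinhaus (g := fun n : ℕ => T ^ n) h1
  exact ⟨C, fun n x => ((T ^ n).le_opNorm x).trans (by gcongr; exact hC n)⟩

theorem almostPeriodic_of_weaklyAlmostPeriodic_countable_unimodular_spectrum
    {X : Type*} [NormedAddCommGroup X] [NormedSpace ℂ X] [CompleteSpace X]
    (T : X →L[ℂ] X)
    (hwap : ∀ x : X, IsCompact (closure
      (toWeakSpace ℂ X '' Set.range (fun n : ℕ => (T ^ n) x))))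
    (hσ : (spectrum ℂ T ∩ {lam : ℂ | ‖lam‖ = 1}).Countable) :
    ∀ x : X, IsCompact (closure (Set.range (fun n : ℕ => (T ^ n) x))) := by
  suffices H : ∀ x : X, TotallyBounded (Set.range (fun n : ℕ => (T ^ n) x)) from
    fun x => (H x).closure.isCompact_of_isClosed isClosed_closure
  by_contra! hcon
  obtain ⟨x₀, hx₀⟩ := hcon
  obtain ⟨C, hC⟩ := aux_powerbounded T hwap
  have hcl : IsClosed (auxTB X : Set (ℕ →ᵇ X)) := auxTB_closed X
  let J0 : X →L[ℂ] (ℕ →ᵇ X) := LinearMap.mkContinuous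
    { toFun := fun x => BoundedContinuousFunction.ofNormedAddCommGroup (fun n : ℕ => (T ^ n) x)
        continuous_of_discreteTopology (C * ‖x‖) (fun n => hC n x)
      map_add' := by intro x y; ext n; simp
      map_smul' := by intro c x; ext n; simp } C (by
    intro x
    exact BoundedContinuousFunction.norm_ofNormedAddCommGroup_le _
      ((norm_nonneg _).trans (hC 0 x)) (fun n => hC n x))
  let J : X →L[ℂ] ((ℕ →ᵇ X) ⧸ auxTB X) := (auxTB X).mkQL ∘L J0
  have hJ : ∀ x, J x = Submodule.Quotient.mk (J0 x) := fun x => rfl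
  have hJ0 : ∀ x, J x = 0 ↔ TotallyBounded (Set.range (fun n : ℕ => (T ^ n) x)) := by
    intro x
    rw [hJ, Submodule.Quotient.mk_eq_zero]; rfl
  obtain ⟨l, hl, L, hL, hLJ, hLT⟩ := aux_eigen T (auxQ (auxS X) auxS_mem) (auxQ (auxR X) auxR_mem)
    (by
      ext z
      obtain ⟨f, rfl⟩ := Submodule.Quotient.mk_surjective _ z
      change Submodule.Quotient.mk (auxS X (auxR X f)) = Submodule.Quotient.mk f
      congr 1)
    (by
      ext z
      obtain ⟨f, rfl⟩ := Submodule.Quotient.mk_surjective _ z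
      change Submodule.Quotient.mk (auxR X (auxS X f)) = Submodule.Quotient.mk f
      rw [Submodule.Quotient.eq, mem_auxTB]
      refine ((Set.toFinite ({-f 0, 0} : Set X)).totallyBounded).subset ?_
      rintro _ ⟨_ | n, rfl⟩
      · left
        simp [auxR_apply, auxFw]
      · right
        simp [auxR_apply, auxFw, auxS_apply])
    (auxQ_norm _ _ auxS_norm) (auxQ_norm _ _ auxR_norm) J (by
      intro x
      rw [hJ, hJ, auxQ_mk]
      congr 1) hσ x₀ (by rwa [Ne, hJ0])
  obtain ⟨x, hx⟩ : ∃ x, L x ≠ 0 := by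
    by_contra! h
    exact hL (ContinuousLinearMap.ext h)
  have hLn : ∀ n : ℕ, L ((T ^ n) x) = l ^ n • L x := by
    intro n
    induction n with
    | zero => simp
    | succ k ih =>
      rw [pow_succ', pow_succ', mul_smul, ← ih, ← hLT]; rfl
  obtain ⟨g, -, hg⟩ := exists_dual_vector ℂ (L x) (norm_ne_zero_iff.2 hx)
  obtain ⟨m, hm, hmt⟩ := aux_minimal T C hC x (hwap x)
  have hLm : L m = 0 := hLJ m ((hJ0 m).2 hmt)
  have hcont : Continuous (fun y : WeakSpace ℂ X => (g ∘L L) ((toWeakSpace ℂ X).symm y)) :=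
    WeakBilin.eval_continuous (topDualPairing ℂ X).flip (g ∘L L)
  have hclosed : IsClosed {y : WeakSpace ℂ X | ‖(g ∘L L) ((toWeakSpace ℂ X).symm y)‖ = ‖L x‖} :=
    isClosed_eq hcont.norm continuous_const
  have hmem := closure_minimal (s := toWeakSpace ℂ X '' Set.range (fun n : ℕ => (T ^ n) x))
    (t := {y : WeakSpace ℂ X | ‖(g ∘L L) ((toWeakSpace ℂ X).symm y)‖ = ‖L x‖}) (by
      rintro _ ⟨_, ⟨n, rfl⟩, rfl⟩
      change ‖g (L ((T ^ n) x))‖ = ‖L x‖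
      rw [hLn, map_smul, hg, norm_smul, norm_pow, hl, one_pow, one_mul]
      simp) hclosed hm
  have h2 : ‖(g ∘L L) m‖ = ‖L x‖ := by simpa using hmem
  rw [ContinuousLinearMap.comp_apply, hLm, map_zero, norm_zero] at h2
  exact hx (norm_eq_zero.1 h2.symm)
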